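/- arXiv:2512.04670 — 2 statements merged into one kernel-verified Lean document; each statement's English description precedes it below -/
import Mathlib

section
/- There exist infinitely many pairwise distinct functions w : Q → ℂ, each of which is smooth on Q, satisfies the linear KdV equation ∂w/∂t = −∂³w/∂x³ at every point of Q, and satisfies lim_{x→0⁺} w(x,t) = 0 for every t > 0 and lim_{t→0⁺} w(x,t) = 0 for every x > 0. -/
open MeasureTheory Filter Set

/-- The open quarter-plane `Q = {(x,t) : x > 0, t > 0}`. -/
def quarterPlane : Set (ℝ × ℝ) := {p | 0 < p.1 ∧ 0 < p.2}

/-- `w` is smooth on `Q`, satisfies the linear KdV equation `∂w/∂t = −∂³w/∂x³` at every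
point of `Q`, and has vanishing boundary limit (as `x → 0⁺`) and initial limit
(as `t → 0⁺`). -/
def IsHomogeneousKdVSol (w : ℝ → ℝ → ℂ) : Prop :=
  ContDiffOn ℝ (⊤ : ℕ∞) (fun p : ℝ × ℝ => w p.1 p.2) quarterPlane ∧
  (∀ x t : ℝ, 0 < x → 0 < t →
    deriv (fun s => w x s) t = -(iteratedDeriv 3 (fun y => w y t) x)) ∧
  (∀ t : ℝ, 0 < t → Tendsto (fun x => w x t) (nhdsWithin 0 (Ioi 0)) (nhds (0 : ℂ))) ∧
  (∀ x : ℝ, 0 < x → Tendsto (fun t => w x t) (nhdsWithin 0 (Ioi 0)) (nhds (0 : ℂ)))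

/-!
Let `Ai` be the Airy function, so that `Ai'' = y Ai`, and put `a = (3t)^(-1/3)`. The fundamental
solution `a Ai(a x)` of the linear KdV equation does not vanish at `x = 0`, but its second
`x`-derivative `a³ g(a x)`, where `g(y) = Ai''(y) = y Ai(y)`, is again a solution and does vanish
there. For fixed `x > 0` it equals `x⁻³ y³ g(y)` with `y = a x → ∞` as `t → 0⁺`, which tends to zero
because `Ai` decays faster than any power. Its complex multiples are therefore infinitely many
solutions. In place of `Ai` we use a multiple of it that has a positive integrand on the half-line:
`√3 / (2π) ∫₀^∞ exp (-(s³ + (y / s)³) / 3) ds = Ai(y)` for `y > 0`.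
-/

open scoped Topology ContDiff Nat

section AiryIntegral

variable {k m n : ℕ} {y s : ℝ}

/-- The integrand of the Airy-type integral `airyMoment n`, with its exponent symmetric under
`s ↦ y / s`. -/
noncomputable def airyKernel (n : ℕ) (y s : ℝ) : ℝ :=
  s⁻¹ ^ n * Real.exp (-(s ^ 3 + (y / s) ^ 3) / 3)

/-- The integral `∫₀^∞ s⁻ⁿ exp (-(s³ + (y / s)³) / 3) ds`. On `y > 0`, `airyMoment 0` is the Airy
function `Ai` up to the factor `2π / √3`, and the other moments express its derivatives. -/
noncomputable def airyMoment (n : ℕ) (y : ℝ) : ℝ := ∫ s in Ioi 0, airyKernel n y s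

lemma airyKernel_pos (n : ℕ) (y : ℝ) (hs : 0 < s) : 0 < airyKernel n y s := by
  unfold airyKernel; positivity

lemma measurable_airyKernel (n : ℕ) (y : ℝ) : Measurable (airyKernel n y) := by
  unfold airyKernel; fun_prop

lemma airyKernel_anti (n : ℕ) {z : ℝ} (hz : 0 ≤ z) (hzy : z ≤ y) (hs : 0 < s) :
    airyKernel n y s ≤ airyKernel n z s := by
  unfold airyKernel; gcongr

lemma airyKernel_le_inv_pow (n : ℕ) (hy : 0 ≤ y) (hs : 0 < s) : airyKernel n y s ≤ s⁻¹ ^ n := by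
  refine mul_le_of_le_one_right (by positivity) (Real.exp_le_one_iff.2 ?_)
  have : 0 ≤ s ^ 3 + (y / s) ^ 3 := by positivity
  linarith

lemma airyKernel_le (h : n + k = 3 * m) (hy : 0 < y) (hs : 0 < s) :
    airyKernel n y s ≤ m ! * (3 / y ^ 3) ^ m * (s ^ k * Real.exp (-(s ^ 3 / 3))) := by
  -- The factor `exp (-r)`, where `r = (y / s) ^ 3 / 3`, absorbs `s⁻¹ ^ n`.
  have hexp : ((y / s) ^ 3 / 3) ^ m * Real.exp (-((y / s) ^ 3 / 3)) ≤ m ! := by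
    rw [Real.exp_neg, ← div_eq_mul_inv, div_le_iff₀ (Real.exp_pos _),
      ← div_le_iff₀' (by positivity)]
    exact Real.pow_div_factorial_le_exp _ (by positivity) m
  have hpow : s⁻¹ ^ n = (3 / y ^ 3) ^ m * s ^ k * ((y / s) ^ 3 / 3) ^ m := by
    have hbase : 3 / y ^ 3 * ((y / s) ^ 3 / 3) = s⁻¹ ^ 3 := by field_simp
    rw [mul_right_comm, ← mul_pow, hbase, ← pow_mul, ← h, pow_add, mul_assoc, ← mul_pow,
      inv_mul_cancel₀ hs.ne', one_pow, mul_one]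
  calc airyKernel n y s
      = (3 / y ^ 3) ^ m * (s ^ k * Real.exp (-(s ^ 3 / 3))) *
          (((y / s) ^ 3 / 3) ^ m * Real.exp (-((y / s) ^ 3 / 3))) := by
        rw [airyKernel, hpow, neg_div, add_div, neg_add, Real.exp_add]; ring
    _ ≤ (3 / y ^ 3) ^ m * (s ^ k * Real.exp (-(s ^ 3 / 3))) * m ! := by gcongr
    _ = m ! * (3 / y ^ 3) ^ m * (s ^ k * Real.exp (-(s ^ 3 / 3))) := by ring

lemma integrableOn_pow_mul_exp_neg_cube (k : ℕ) :
    IntegrableOn (fun s : ℝ => s ^ k * Real.exp (-(s ^ 3 / 3))) (Ioi 0) := by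
  have h := integrableOn_rpow_mul_exp_neg_mul_rpow (p := 3) (s := k) (b := 1 / 3)
    (neg_one_lt_zero.trans_le k.cast_nonneg) (by norm_num) (by norm_num)
  refine h.congr_fun (fun s _ => ?_) measurableSet_Ioi
  norm_cast
  ring_nf

lemma integrableOn_airyKernel (n : ℕ) (hy : 0 < y) : IntegrableOn (airyKernel n y) (Ioi 0) := by
  refine ((integrableOn_pow_mul_exp_neg_cube (2 * n)).const_mul (n ! * (3 / y ^ 3) ^ n)).mono'
    (measurable_airyKernel n y).aestronglyMeasurable (ae_restrict_of_forall_mem measurableSet_Ioi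
      fun s (hs : 0 < s) => ?_)
  rw [Real.norm_of_nonneg (airyKernel_pos n y hs).le]
  exact airyKernel_le (by ring) hy hs

lemma airyMoment_le (h : n + k = 3 * m) (hy : 0 < y) :
    airyMoment n y ≤
      m ! * (3 / y ^ 3) ^ m * ∫ s in Ioi (0 : ℝ), s ^ k * Real.exp (-(s ^ 3 / 3)) := by
  rw [← integral_const_mul]
  exact setIntegral_mono_on (integrableOn_airyKernel n hy)
    ((integrableOn_pow_mul_exp_neg_cube k).const_mul _) measurableSet_Ioi
    fun s hs => airyKernel_le h hy hs

lemma airyMoment_pos (n : ℕ) (hy : 0 < y) : 0 < airyMoment n y := by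
  refine (setIntegral_pos_iff_support_of_nonneg_ae (ae_restrict_of_forall_mem measurableSet_Ioi
    fun s hs => (airyKernel_pos n y hs).le) (integrableOn_airyKernel n hy)).2 ?_
  have hsupp : Ioi 0 ⊆ Function.support (airyKernel n y) := fun s hs => (airyKernel_pos n y hs).ne'
  simp [inter_eq_right.2 hsupp]

lemma hasDerivAt_airyKernel_left (n : ℕ) (y s : ℝ) :
    HasDerivAt (airyKernel n · s) (-(y ^ 2 * airyKernel (n + 3) y s)) y := by
  have h := (((((hasDerivAt_id y).div_const s).pow 3).const_add (s ^ 3)).neg.div_const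
    3).exp.const_mul (s⁻¹ ^ n)
  refine h.congr_deriv ?_
  simp only [airyKernel, id_eq, Pi.pow_apply, Pi.neg_apply, Nat.cast_ofNat, Nat.add_one_sub_one]
  ring

lemma hasDerivAt_airyKernel_right (n : ℕ) (y : ℝ) (hs : 0 < s) :
    HasDerivAt (airyKernel (n + 2) y)
      (y ^ 3 * airyKernel (n + 6) y s - airyKernel n y s - (n + 2) * airyKernel (n + 3) y s) s := by
  have hinv := hasDerivAt_inv hs.ne'
  have h := (hinv.pow (n + 2)).mul
    (((hasDerivAt_pow 3 s).add ((hinv.const_mul y).pow 3)).neg.div_const 3).exp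
  refine h.congr_deriv ?_
  have hs' : s ≠ 0 := hs.ne'
  simp only [airyKernel, Pi.pow_apply, Pi.neg_apply, Pi.add_apply, inv_pow, Nat.cast_add,
    Nat.cast_ofNat, Nat.add_one_sub_one]
  field_simp
  ring

lemma hasDerivAt_airyMoment (n : ℕ) (hy : 0 < y) :
    HasDerivAt (airyMoment n) (-(y ^ 2 * airyMoment (n + 3) y)) y := by
  have h := (hasDerivAt_integral_of_dominated_loc_of_deriv_le (μ := volume.restrict (Ioi 0))
    (F := airyKernel n) (F' := fun z s => -(z ^ 2 * airyKernel (n + 3) z s))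
    (bound := fun s => (2 * y) ^ 2 * airyKernel (n + 3) (y / 2) s)
    (Ioo_mem_nhds (half_lt_self hy) (lt_two_mul_self hy))
    (.of_forall fun z => (measurable_airyKernel n z).aestronglyMeasurable)
    (integrableOn_airyKernel n hy)
    ((measurable_airyKernel (n + 3) y).const_mul _).neg.aestronglyMeasurable
    (ae_restrict_of_forall_mem measurableSet_Ioi fun s (hs : 0 < s) z hz => ?_)
    ((integrableOn_airyKernel (n + 3) (half_pos hy)).const_mul _)
    (.of_forall fun s z _ => hasDerivAt_airyKernel_left n z s)).2
  · rwa [integral_neg, integral_const_mul] at h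
  · have hpos := airyKernel_pos (n + 3) z hs
    have hz0 : 0 < z := (half_pos hy).trans hz.1
    rw [norm_neg, Real.norm_of_nonneg (by positivity)]
    exact mul_le_mul (pow_le_pow_left₀ hz0.le hz.2.le 2)
      (airyKernel_anti _ (half_pos hy).le hz.1.le hs) hpos.le (by positivity)

lemma continuousWithinAt_airyKernel_zero (n : ℕ) (hy : 0 < y) :
    ContinuousWithinAt (airyKernel (n + 1) y) (Ici 0) 0 := by
  rw [← continuousWithinAt_Ioi_iff_Ici, ContinuousWithinAt,
    show airyKernel (n + 1) y 0 = 0 by simp [airyKernel]]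
  have hbound : Continuous fun s : ℝ =>
      (n + 1)! * (3 / y ^ 3) ^ (n + 1) * (s ^ (2 * n + 2) * Real.exp (-(s ^ 3 / 3))) := by fun_prop
  refine squeeze_zero' ?_ ?_ ((hbound.tendsto' 0 0 (by simp)).mono_left nhdsWithin_le_nhds)
  · filter_upwards [self_mem_nhdsWithin] with s hs using (airyKernel_pos _ y hs).le
  · filter_upwards [self_mem_nhdsWithin] with s hs using airyKernel_le (by ring) hy hs

lemma tendsto_airyKernel_atTop (n : ℕ) (hy : 0 ≤ y) :
    Tendsto (airyKernel (n + 1) y) atTop (𝓝 0) := by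
  have hbound : Tendsto (fun s : ℝ => s⁻¹ ^ (n + 1)) atTop (𝓝 0) := by
    simpa using (tendsto_inv_atTop_zero (𝕜 := ℝ)).pow (n + 1)
  refine squeeze_zero' ?_ ?_ hbound
  · filter_upwards [eventually_gt_atTop 0] with s hs using (airyKernel_pos _ y hs).le
  · filter_upwards [eventually_gt_atTop 0] with s hs using airyKernel_le_inv_pow _ hy hs

lemma airyMoment_recurrence (n : ℕ) (hy : 0 < y) :
    y ^ 3 * airyMoment (n + 6) y = airyMoment n y + (n + 2) * airyMoment (n + 3) y := by
  have hint (j : ℕ) (c : ℝ) : IntegrableOn (fun s => c * airyKernel j y s) (Ioi 0) :=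
    (integrableOn_airyKernel j hy).const_mul c
  have hdiff : IntegrableOn (fun s => y ^ 3 * airyKernel (n + 6) y s - airyKernel n y s) (Ioi 0) :=
    (hint (n + 6) (y ^ 3)).sub (integrableOn_airyKernel n hy)
  have h := integral_Ioi_of_hasDerivAt_of_tendsto (continuousWithinAt_airyKernel_zero (n + 1) hy)
    (fun s hs => hasDerivAt_airyKernel_right n y hs) (hdiff.sub (hint (n + 3) (n + 2)))
    (tendsto_airyKernel_atTop (n + 1) hy.le)
  rw [integral_sub hdiff (hint (n + 3) (n + 2)),
    integral_sub (hint (n + 6) (y ^ 3)) (integrableOn_airyKernel n hy),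
    integral_const_mul, integral_const_mul] at h
  have hzero : airyKernel (n + 2) y 0 = 0 := by simp [airyKernel]
  simp only [airyMoment]
  linarith

lemma tendsto_mul_airyMoment_zero_nhdsGT_zero :
    Tendsto (fun y => y * airyMoment 0 y) (𝓝[>] 0) (𝓝 0) := by
  set C := ∫ s in Ioi (0 : ℝ), s ^ 0 * Real.exp (-(s ^ 3 / 3))
  have hbound : Tendsto (fun y => y * C) (𝓝[>] 0) (𝓝 0) :=
    ((continuous_mul_const C).tendsto' 0 0 (zero_mul C)).mono_left nhdsWithin_le_nhds
  refine squeeze_zero' ?_ ?_ hbound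
  · filter_upwards [self_mem_nhdsWithin] with y (hy : 0 < y)
    exact (mul_pos hy (airyMoment_pos 0 hy)).le
  · filter_upwards [self_mem_nhdsWithin] with y (hy : 0 < y)
    have hle := airyMoment_le (n := 0) (k := 0) (m := 0) rfl hy
    rw [Nat.factorial_zero, Nat.cast_one, pow_zero, one_mul, one_mul] at hle
    exact mul_le_mul_of_nonneg_left hle hy.le

lemma tendsto_pow_mul_airyMoment_zero_atTop (k : ℕ) :
    Tendsto (fun y => y ^ k * airyMoment 0 y) atTop (𝓝 0) := by
  set C := ∫ s in Ioi (0 : ℝ), s ^ (3 * (k + 1)) * Real.exp (-(s ^ 3 / 3))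
  have hC : 0 ≤ C := setIntegral_nonneg measurableSet_Ioi fun s (hs : 0 < s) => by positivity
  have hbound : Tendsto (fun y : ℝ => (k + 1)! * 3 ^ (k + 1) * C * y⁻¹) atTop (𝓝 0) := by
    simpa using tendsto_inv_atTop_zero.const_mul ((k + 1)! * 3 ^ (k + 1) * C)
  refine squeeze_zero' ?_ ?_ hbound
  · filter_upwards [eventually_gt_atTop 0] with y hy
    exact (mul_pos (pow_pos hy k) (airyMoment_pos 0 hy)).le
  · filter_upwards [eventually_ge_atTop 1] with y hy
    have hy0 : 0 < y := one_pos.trans_le hy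
    have hpow : y ^ k * (3 / y ^ 3) ^ (k + 1) ≤ 3 ^ (k + 1) * y⁻¹ := by
      rw [div_pow, ← pow_mul, ← one_div, mul_div_left_comm]
      refine mul_le_mul_of_nonneg_left ?_ (by positivity)
      rw [div_le_div_iff₀ (by positivity) hy0, one_mul, ← pow_succ]
      exact pow_le_pow_right₀ hy (by lia)
    calc y ^ k * airyMoment 0 y
        ≤ y ^ k * ((k + 1)! * (3 / y ^ 3) ^ (k + 1) * C) := by
          gcongr
          exact airyMoment_le (zero_add _) hy0
      _ = (k + 1)! * C * (y ^ k * (3 / y ^ 3) ^ (k + 1)) := by ring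
      _ ≤ (k + 1)! * C * (3 ^ (k + 1) * y⁻¹) := by gcongr
      _ = (k + 1)! * 3 ^ (k + 1) * C * y⁻¹ := by ring

end AiryIntegral

section AiryEquation

variable {E : Type*} [NormedAddCommGroup E] [NormedSpace ℝ E] {f f' : ℝ → E}

/-- `f` solves the Airy equation `f'' = y f` on the half-line `y > 0`, written as a first-order
system in which `f'` is the derivative of `f`. -/
structure IsAirySolution (f f' : ℝ → E) : Prop where
  hasDerivAt : ∀ y, 0 < y → HasDerivAt f (f' y) y
  hasDerivAt_deriv : ∀ y, 0 < y → HasDerivAt f' (y • f y) y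

lemma isAirySolution_airyMoment :
    IsAirySolution (airyMoment 0) (fun y => -(y ^ 2 * airyMoment 3 y)) where
  hasDerivAt _ hy := hasDerivAt_airyMoment 0 hy
  hasDerivAt_deriv y hy := by
    refine ((hasDerivAt_pow 2 y).mul (hasDerivAt_airyMoment 3 hy)).neg.congr_deriv ?_
    have hrec := airyMoment_recurrence 0 hy
    simp only [zero_add, Nat.cast_zero, Nat.cast_ofNat, Nat.add_one_sub_one, pow_one,
      Nat.reduceAdd, smul_eq_mul] at hrec ⊢
    linear_combination y * hrec

namespace IsAirySolution

lemma smul_const {a a' : ℝ → ℝ} (h : IsAirySolution a a') (c : E) :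
    IsAirySolution (fun y => a y • c) (fun y => a' y • c) where
  hasDerivAt y hy := (h.hasDerivAt y hy).smul_const c
  hasDerivAt_deriv y hy := by
    simpa only [smul_eq_mul, mul_smul] using (h.hasDerivAt_deriv y hy).smul_const c

lemma contDiffOn (h : IsAirySolution f f') : ContDiffOn ℝ ∞ f (Ioi 0) := by
  have hnat (k : ℕ) : ContDiffOn ℝ k f (Ioi 0) ∧ ContDiffOn ℝ k f' (Ioi 0) := by
    induction k with
    | zero =>
      exact ⟨contDiffOn_zero.2 fun y hy => (h.hasDerivAt y hy).continuousAt.continuousWithinAt,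
        contDiffOn_zero.2 fun y hy => (h.hasDerivAt_deriv y hy).continuousAt.continuousWithinAt⟩
    | succ k ih =>
      push_cast
      simp only [contDiffOn_succ_iff_deriv_of_isOpen isOpen_Ioi]
      exact ⟨⟨fun y hy => (h.hasDerivAt y hy).differentiableAt.differentiableWithinAt, by simp,
          ih.2.congr fun y hy => (h.hasDerivAt y hy).deriv⟩,
        fun y hy => (h.hasDerivAt_deriv y hy).differentiableAt.differentiableWithinAt, by simp,
          (contDiffOn_id.smul ih.1).congr fun y hy => (h.hasDerivAt_deriv y hy).deriv⟩
  exact contDiffOn_infty.2 fun k => (hnat k).1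

end IsAirySolution

end AiryEquation

section Similarity

variable {E : Type*} [NormedAddCommGroup E] [NormedSpace ℝ E] {f f' g : ℝ → E} {x t : ℝ}

/-- `g` is smooth on the half-line `y > 0` and satisfies there the ordinary differential equation
`g''' = 3 g + y g'` to which the linear KdV equation reduces under the ansatz `selfSimilar g`. -/
structure IsKdVProfile (g : ℝ → E) : Prop where
  contDiffOn : ContDiffOn ℝ ∞ g (Ioi 0)
  iteratedDeriv_three : ∀ y, 0 < y → iteratedDeriv 3 g y = (3 : ℝ) • g y + y • deriv g y

/-- The factor `(3 t)^(-1/3)` by which lengths are rescaled at time `t`. -/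
noncomputable def kdvScale (t : ℝ) : ℝ := (3 * t) ^ (-(1 / 3) : ℝ)

/-- The self-similar function with profile `g`. The exponent `3` of the prefactor is the one for
which `g = f''`, with `f` an Airy function, gives the second `x`-derivative of the solution
`kdvScale t • f (kdvScale t * x)` of the linear KdV equation. -/
noncomputable def selfSimilar (g : ℝ → E) (x t : ℝ) : E :=
  kdvScale t ^ 3 • g (kdvScale t * x)

lemma IsAirySolution.isKdVProfile (h : IsAirySolution f f') :
    IsKdVProfile (fun y => y • f y) where
  contDiffOn := contDiffOn_id.smul h.contDiffOn
  iteratedDeriv_three y hy := by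
    have hd₁ : EqOn (deriv fun y => y • f y) (fun y => f y + y • f' y) (Ioi 0) := fun z hz => by
      simpa [add_comm] using ((hasDerivAt_id z).fun_smul (h.hasDerivAt z hz)).deriv
    have hd₂ : EqOn (deriv fun y => f y + y • f' y) (fun y => (2 : ℝ) • f' y + y ^ 2 • f y)
        (Ioi 0) := fun z hz => by
      refine (((h.hasDerivAt z hz).add ((hasDerivAt_id z).smul
        (h.hasDerivAt_deriv z hz))).congr_deriv ?_).deriv
      simp only [id]
      module
    have hd₃ : HasDerivAt (fun y => (2 : ℝ) • f' y + y ^ 2 • f y)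
        ((4 * y) • f y + y ^ 2 • f' y) y := by
      refine (((h.hasDerivAt_deriv y hy).const_smul (2 : ℝ)).add
        ((hasDerivAt_pow 2 y).smul (h.hasDerivAt y hy))).congr_deriv ?_
      simp only [Nat.cast_ofNat, Nat.add_one_sub_one, pow_one]
      module
    rw [iteratedDeriv_succ', hd₁.iteratedDeriv_of_isOpen isOpen_Ioi 2 hy, iteratedDeriv_succ',
      hd₂.iteratedDeriv_of_isOpen isOpen_Ioi 1 hy, iteratedDeriv_one, hd₃.deriv, hd₁ hy]
    module

lemma kdvScale_pos (ht : 0 < t) : 0 < kdvScale t := by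
  unfold kdvScale; positivity

lemma hasDerivAt_kdvScale (ht : 0 < t) : HasDerivAt kdvScale (-kdvScale t ^ 4) t := by
  have h := ((hasDerivAt_id t).const_mul (3 : ℝ)).rpow_const (p := -(1 / 3))
    (Or.inl (by simpa using ht.ne'))
  refine h.congr_deriv ?_
  have hpow : kdvScale t ^ 4 = (3 * t) ^ (-(1 / 3) - 1 : ℝ) := by
    rw [kdvScale, ← Real.rpow_mul_natCast (by positivity)]
    norm_num
  rw [hpow, id]
  ring

lemma tendsto_kdvScale_nhdsGT_zero : Tendsto kdvScale (𝓝[>] 0) atTop := by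
  refine (tendsto_rpow_neg_nhdsGT_zero (by norm_num)).comp (tendsto_nhdsWithin_iff.2 ⟨?_, ?_⟩)
  · exact ((continuous_const_mul (3 : ℝ)).tendsto' 0 0 (mul_zero 3)).mono_left nhdsWithin_le_nhds
  · filter_upwards [self_mem_nhdsWithin] with t (ht : 0 < t)
    exact mul_pos three_pos ht

lemma iteratedDeriv_comp_const_mul_of_mapsTo {𝕜 F : Type*} [NontriviallyNormedField 𝕜]
    [NormedAddCommGroup F] [NormedSpace 𝕜 F] {n : ℕ} {f : 𝕜 → F} {u : Set 𝕜} {a x : 𝕜}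
    (hu : IsOpen u) (hf : ContDiffOn 𝕜 n f u) (hau : MapsTo (a * ·) u u) (hx : x ∈ u) :
    iteratedDeriv n (fun y => f (a * y)) x = a ^ n • iteratedDeriv n f (a * x) := by
  have h := iteratedDerivWithin_comp_const_smul hx hu.uniqueDiffOn hf a hau
  rwa [iteratedDerivWithin_of_isOpen hu hx, iteratedDerivWithin_of_isOpen hu (hau hx)] at h

namespace IsKdVProfile

lemma contDiffOn_selfSimilar (hg : IsKdVProfile g) :
    ContDiffOn ℝ ∞ (fun p : ℝ × ℝ => selfSimilar g p.1 p.2) quarterPlane := by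
  have hscale : ContDiffOn ℝ ∞ (fun p : ℝ × ℝ => kdvScale p.2) quarterPlane :=
    (contDiff_const.mul contDiff_snd).contDiffOn.rpow_const_of_ne
      fun p hp => (mul_pos three_pos hp.2).ne'
  exact (hscale.pow 3).smul
    (hg.contDiffOn.comp (hscale.mul contDiffOn_fst) fun p hp => mul_pos (kdvScale_pos hp.2) hp.1)

lemma deriv_selfSimilar (hg : IsKdVProfile g) (hx : 0 < x) (ht : 0 < t) :
    deriv (fun s => selfSimilar g x s) t = -iteratedDeriv 3 (fun y => selfSimilar g y t) x := by
  set a := kdvScale t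
  have ha : 0 < a := kdvScale_pos ht
  have hax : 0 < a * x := mul_pos ha hx
  have hgd : HasDerivAt g (deriv g (a * x)) (a * x) :=
    ((hg.contDiffOn.contDiffAt (Ioi_mem_nhds hax)).differentiableAt (by simp)).hasDerivAt
  have hscale := hasDerivAt_kdvScale ht
  have htime : HasDerivAt (fun s => selfSimilar g x s)
      (-(a ^ 6 • ((3 : ℝ) • g (a * x) + (a * x) • deriv g (a * x)))) t := by
    refine ((hscale.pow 3).smul (hgd.scomp t (hscale.mul_const x))).congr_deriv ?_
    simp only [Pi.pow_apply, Function.comp_apply, Nat.cast_ofNat, Nat.add_one_sub_one]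
    module
  have hspace : iteratedDeriv 3 (fun y => selfSimilar g y t) x =
      a ^ 6 • iteratedDeriv 3 g (a * x) := by
    have hg₃ : ContDiffOn ℝ (3 : ℕ) g (Ioi 0) := contDiffOn_infty.1 hg.contDiffOn 3
    simp only [selfSimilar]
    have hmaps : MapsTo (a * ·) (Ioi 0) (Ioi 0) := fun y hy => mul_pos ha hy
    rw [iteratedDeriv_fun_const_smul_field,
      iteratedDeriv_comp_const_mul_of_mapsTo isOpen_Ioi hg₃ hmaps hx, smul_smul, ← pow_add]
  rw [htime.deriv, hspace, hg.iteratedDeriv_three _ hax]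

end IsKdVProfile

lemma tendsto_selfSimilar_boundary (hg : Tendsto g (𝓝[>] 0) (𝓝 0)) (ht : 0 < t) :
    Tendsto (fun x => selfSimilar g x t) (𝓝[>] 0) (𝓝 0) := by
  have harg : Tendsto (fun x => kdvScale t * x) (𝓝[>] 0) (𝓝[>] 0) := by
    refine tendsto_nhdsWithin_iff.2 ⟨?_, ?_⟩
    · exact ((continuous_const_mul _).tendsto' 0 0 (mul_zero _)).mono_left nhdsWithin_le_nhds
    · filter_upwards [self_mem_nhdsWithin] with x (hx : 0 < x)
      exact mul_pos (kdvScale_pos ht) hx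
  simpa [selfSimilar] using (hg.comp harg).const_smul (kdvScale t ^ 3)

lemma tendsto_selfSimilar_initial (hg : Tendsto (fun y => y ^ 3 • g y) atTop (𝓝 0)) (hx : 0 < x) :
    Tendsto (fun t => selfSimilar g x t) (𝓝[>] 0) (𝓝 0) := by
  have harg : Tendsto (fun t => kdvScale t * x) (𝓝[>] 0) atTop :=
    tendsto_kdvScale_nhdsGT_zero.atTop_mul_const hx
  have hw (t : ℝ) : selfSimilar g x t =
      (x ^ 3)⁻¹ • ((kdvScale t * x) ^ 3 • g (kdvScale t * x)) := by
    rw [selfSimilar, smul_smul, mul_pow, mul_comm (kdvScale t ^ 3),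
      inv_mul_cancel_left₀ (pow_pos hx 3).ne']
  simpa [hw] using (hg.comp harg).const_smul (x ^ 3)⁻¹

end Similarity

lemma IsKdVProfile.isHomogeneousKdVSol {g : ℝ → ℂ} (hg : IsKdVProfile g)
    (hzero : Tendsto g (𝓝[>] 0) (𝓝 0)) (htop : Tendsto (fun y => y ^ 3 • g y) atTop (𝓝 0)) :
    IsHomogeneousKdVSol (selfSimilar g) :=
  ⟨hg.contDiffOn_selfSimilar, fun _ _ hx ht => hg.deriv_selfSimilar hx ht,
    fun _ ht => tendsto_selfSimilar_boundary hzero ht,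
    fun _ hx => tendsto_selfSimilar_initial htop hx⟩

/-- The self-similar solution of the linear KdV equation whose profile is `c` times the second
derivative `y ↦ y * airyMoment 0 y` of the Airy function `airyMoment 0`. -/
noncomputable def airyKdVSol (c : ℂ) : ℝ → ℝ → ℂ := selfSimilar fun y => y • airyMoment 0 y • c

lemma isHomogeneousKdVSol_airyKdVSol (c : ℂ) : IsHomogeneousKdVSol (airyKdVSol c) := by
  refine (isAirySolution_airyMoment.smul_const c).isKdVProfile.isHomogeneousKdVSol ?_ ?_
  · simpa only [mul_smul, zero_smul] using tendsto_mul_airyMoment_zero_nhdsGT_zero.smul_const c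
  · simpa only [pow_succ, mul_smul, zero_smul] using
      (tendsto_pow_mul_airyMoment_zero_atTop 4).smul_const c

lemma airyKdVSol_inj {c d : ℂ} {x t : ℝ} (hx : 0 < x) (ht : 0 < t) :
    airyKdVSol c x t = airyKdVSol d x t ↔ c = d := by
  have hscale := kdvScale_pos ht
  have hmoment := airyMoment_pos 0 (mul_pos hscale hx)
  simp [airyKdVSol, selfSimilar, hscale.ne', hx.ne', hmoment.ne']

/-- There are infinitely many pairwise distinct (as functions on `Q`) solutions of the
homogeneous Dirichlet IBVP for the linear KdV equation on the quarter-plane. -/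
theorem kdv_infinitely_many_solutions :
    ∃ F : ℕ → ℝ → ℝ → ℂ,
      (∀ m n : ℕ, m ≠ n → ∃ x t : ℝ, 0 < x ∧ 0 < t ∧ F m x t ≠ F n x t) ∧
      ∀ n : ℕ, IsHomogeneousKdVSol (F n) := by
  refine ⟨fun n => airyKdVSol n, fun m n hmn => ⟨1, 1, one_pos, one_pos, fun heq => hmn ?_⟩,
    fun n => isHomogeneousKdVSol_airyKdVSol n⟩
  exact Nat.cast_injective ((airyKdVSol_inj one_pos one_pos).1 heq)
end

section
/- (Uniqueness for the forced heat equation on the half-line.) Let u₀ : ℝ → ℂ be a Schwartz function, g₀ : ℝ → ℂ be infinitely differentiable, and f : ℝ² → ℂ be a Schwartz function, satisfying the compatibility conditions u₀(0) = g₀(0) and u₀''(0) + f(0,0) = g₀'(0). Suppose V and W are functions defined on Q̄ ∖ {(0,0)}, each twice continuously differentiable there, and each satisfies: (i) ∂V/∂t − ∂²V/∂x² = f(x,t) at every point of Q; (ii) lim_{t→0⁺} V(x,t) = u₀(x) for every x > 0; (iii) lim_{x→0⁺} V(x,t) = g₀(t) for every t > 0; (iv) for every t > 0, lim_{x→∞}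 V(x,t) = 0 and sup_{x ≥ 1} |∂V/∂x (x,t)| < ∞; (v) for every T > 0 there exists a Lebesgue-integrable function B_T : (0,∞) → ℝ such that |V(x,t)|² ≤ B_T(x) and |∂V/∂t (x,t)|² ≤ B_T(x) for all x > 0 and all 0 < t ≤ T. Then V = W on Q. -/
open MeasureTheory Filter Set

/-- The closed quarter-plane minus the corner: `Q̄ ∖ {(0,0)}`. -/
def closedQuarterMinusCorner : Set (ℝ × ℝ) :=
  {p : ℝ × ℝ | 0 ≤ p.1 ∧ 0 ≤ p.2} \ {(0, 0)}

/-- `V` is an admissible solution of the forced heat IBVP on the half-line with forcing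
`f`, initial datum `u₀` and boundary datum `g₀`:  it is `C²` on `Q̄ ∖ {(0,0)}`, solves
`∂V/∂t − ∂²V/∂x² = f` on `Q`, attains the initial and boundary data as one-sided
limits, vanishes (with bounded `x`-derivative) as `x → ∞`, and `|V|²`, `|∂V/∂t|²` are
dominated, uniformly for `0 < t ≤ T`, by an integrable function of `x`. -/
def IsAdmissibleHeatSolution (f : ℝ × ℝ → ℂ) (u₀ g₀ : ℝ → ℂ) (V : ℝ → ℝ → ℂ) : Prop :=
  ContDiffOn ℝ 2 (fun p : ℝ × ℝ => V p.1 p.2) closedQuarterMinusCorner ∧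
  (∀ x t : ℝ, 0 < x → 0 < t →
    deriv (fun s => V x s) t - iteratedDeriv 2 (fun y => V y t) x = f (x, t)) ∧
  (∀ x : ℝ, 0 < x → Tendsto (fun t => V x t) (nhdsWithin 0 (Ioi 0)) (nhds (u₀ x))) ∧
  (∀ t : ℝ, 0 < t → Tendsto (fun x => V x t) (nhdsWithin 0 (Ioi 0)) (nhds (g₀ t))) ∧
  (∀ t : ℝ, 0 < t →
    Tendsto (fun x => V x t) atTop (nhds (0 : ℂ)) ∧
    ∃ M : ℝ, ∀ x : ℝ, 1 ≤ x → ‖deriv (fun y => V y t) x‖ ≤ M) ∧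
  (∀ T : ℝ, 0 < T → ∃ B : ℝ → ℝ, IntegrableOn B (Ioi 0) ∧
    ∀ x t : ℝ, 0 < x → 0 < t → t ≤ T →
      ‖V x t‖ ^ 2 ≤ B x ∧ ‖deriv (fun s => V x s) t‖ ^ 2 ≤ B x)

/-! Energy method. The difference `U` of two solutions solves the homogeneous equation with zero
data. Its energy `∫₀^∞ |U(x,t)|² dx` has time derivative `2 ∫₀^∞ ⟨U, ∂ₓ²U⟩ dx`, and since
`∂ₓ⟨U, ∂ₓU⟩ = |∂ₓU|² + ⟨U, ∂ₓ²U⟩` with vanishing boundary terms `⟨U, ∂ₓU⟩` at `0` and `∞`, this is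
nonpositive. So the energy is antitone; it tends to `0` as `t → 0⁺`, hence it vanishes. -/

open scoped Topology RealInnerProductSpace

/-- The energy `∫₀^∞ ‖V(x,t)‖² dx` of `V` at time `t`, the Lyapunov functional of the heat equation
on the half-line. As for `IsAdmissibleHeatSolution`, the space variable is the first argument of
`V`. -/
noncomputable def halfLineEnergy {F : Type*} [NormedAddCommGroup F] (V : ℝ → ℝ → F) (t : ℝ) : ℝ :=
  ∫ x in Ioi 0, ‖V x t‖ ^ 2

lemma integral_Ioi_le_sub_of_hasDerivAt_of_le {a m n : ℝ} {φ g g' : ℝ → ℝ}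
    (hderiv : ∀ x ∈ Ioi a, HasDerivAt g (g' x) x) (hle : ∀ x ∈ Ioi a, φ x ≤ g' x)
    (hφ : IntegrableOn φ (Ioi a)) (hleft : Tendsto g (𝓝[>] a) (𝓝 m))
    (htop : Tendsto g atTop (𝓝 n)) :
    ∫ x in Ioi a, φ x ≤ n - m := by
  have hIoc : ∀ c R, a < c → c ≤ R → ∫ x in c..R, φ x ≤ g R - g c := fun c R hc hcR =>
    intervalIntegral.integral_le_sub_of_hasDeriv_right_of_le hcR
      (fun x hx => (hderiv x (hc.trans_le hx.1)).continuousAt.continuousWithinAt)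
      (fun x hx => (hderiv x (hc.trans hx.1)).hasDerivWithinAt)
      (hφ.mono_set fun _ hx => hc.trans_le hx.1)
      (fun x hx => hle x (hc.trans hx.1))
  have hIoi : ∀ c, a < c → ∫ x in Ioi c, φ x ≤ n - g c := fun c hc =>
    le_of_tendsto_of_tendsto
      (intervalIntegral_tendsto_integral_Ioi c (hφ.mono_set (Ioi_subset_Ioi hc.le)) tendsto_id)
      (htop.sub_const (g c)) ((eventually_ge_atTop c).mono fun R => hIoc c R hc)
  have hlim : Tendsto (fun c => ∫ x in Ioi c, φ x) (𝓝[>] a) (𝓝 (∫ x in Ioi a, φ x)) := by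
    have hcover : AECover (volume.restrict (Ioi a)) (𝓝[>] a) Ioi :=
      aecover_Ioi_of_Ioi (tendsto_id.mono_left nhdsWithin_le_nhds)
    refine (hcover.integral_tendsto_of_countably_generated hφ).congr' ?_
    filter_upwards [self_mem_nhdsWithin] with c hc
    rw [Measure.restrict_restrict_of_subset (Ioi_subset_Ioi (le_of_lt hc))]
  exact le_of_tendsto_of_tendsto hlim (hleft.const_sub n)
    (eventually_mem_nhdsWithin.mono hIoi)

lemma isBoundedUnder_norm_deriv_of_contDiffOn_Ici {E : Type*} [NormedAddCommGroup E]
    [NormedSpace ℝ E] {u : ℝ → E} {a : ℝ} (hu : ContDiffOn ℝ 1 u (Ici a)) :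
    (𝓝[>] a).IsBoundedUnder (· ≤ ·) (norm ∘ deriv u) := by
  have hlim : Tendsto (derivWithin u (Ici a)) (𝓝[>] a) (𝓝 (derivWithin u (Ici a) a)) :=
    (hu.continuousOn_derivWithin (uniqueDiffOn_Ici a) le_rfl a self_mem_Ici).mono_left
      (nhdsWithin_mono a Ioi_subset_Ici_self)
  have hderiv : derivWithin u (Ici a) =ᶠ[𝓝[>] a] deriv u :=
    eventually_mem_nhdsWithin.mono fun _ hx => derivWithin_of_mem_nhds (Ici_mem_nhds hx)
  exact (hlim.congr' hderiv).norm.isBoundedUnder_le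

section InnerProductSpace

variable {F : Type*} [NormedAddCommGroup F] [InnerProductSpace ℝ F]

lemma integral_Ioi_inner_deriv_deriv_nonpos {a : ℝ} {u u' u'' : ℝ → F}
    (hu : ∀ x ∈ Ioi a, HasDerivAt u (u' x) x) (hu' : ∀ x ∈ Ioi a, HasDerivAt u' (u'' x) x)
    (hleft : Tendsto (fun x => ⟪u x, u' x⟫) (𝓝[>] a) (𝓝 0))
    (htop : Tendsto (fun x => ⟪u x, u' x⟫) atTop (𝓝 0))
    (hint : IntegrableOn (fun x => ⟪u x, u'' x⟫) (Ioi a)) :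
    ∫ x in Ioi a, ⟪u x, u'' x⟫ ≤ 0 := by
  simpa only [sub_zero] using integral_Ioi_le_sub_of_hasDerivAt_of_le
    (fun x hx => (hu x hx).inner ℝ (hu' x hx))
    (fun x _ => le_add_of_nonneg_right real_inner_self_nonneg) hint hleft htop

lemma hasDerivAt_integral_norm_sq_of_dominated {α : Type*} [MeasurableSpace α] {μ : Measure α}
    {U U' : ℝ → α → F} {B : α → ℝ} {s : Set ℝ} {t : ℝ} (hs : s ∈ 𝓝 t)
    (hU : ∀ r ∈ s, AEStronglyMeasurable (U r) μ) (hU' : AEStronglyMeasurable (U' t) μ)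
    (hB : Integrable B μ) (hbound : ∀ᵐ x ∂μ, ∀ r ∈ s, ‖U r x‖ ^ 2 ≤ B x ∧ ‖U' r x‖ ^ 2 ≤ B x)
    (hderiv : ∀ᵐ x ∂μ, ∀ r ∈ s, HasDerivAt (fun r => U r x) (U' r x) r) :
    Integrable (fun x => ⟪U t x, U' t x⟫) μ ∧
      HasDerivAt (fun r => ∫ x, ‖U r x‖ ^ 2 ∂μ) (2 * ∫ x, ⟪U t x, U' t x⟫ ∂μ) t := by
  have hts : t ∈ s := mem_of_mem_nhds hs
  have hUt : Integrable (fun x => ‖U t x‖ ^ 2) μ := by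
    refine hB.mono' ((hU t hts).norm.pow 2) (hbound.mono fun x hx => ?_)
    simpa only [norm_pow, norm_norm] using (hx t hts).1
  have hbound' : ∀ᵐ x ∂μ, ∀ r ∈ s, ‖2 * ⟪U r x, U' r x⟫‖ ≤ 2 * B x := by
    filter_upwards [hbound] with x hx r hr
    calc ‖2 * ⟪U r x, U' r x⟫‖ = 2 * ‖⟪U r x, U' r x⟫‖ := by rw [norm_mul, Real.norm_ofNat]
      _ ≤ 2 * ‖U r x‖ * ‖U' r x‖ := by
        rw [mul_assoc]
        exact mul_le_mul_of_nonneg_left (norm_inner_le_norm _ _) zero_le_two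
      _ ≤ ‖U r x‖ ^ 2 + ‖U' r x‖ ^ 2 := two_mul_le_add_sq _ _
      _ ≤ 2 * B x := by linarith [hx r hr]
  obtain ⟨hint, hE⟩ := hasDerivAt_integral_of_dominated_loc_of_deriv_le hs
    (mem_of_superset hs fun r hr => (hU r hr).norm.pow 2) hUt (((hU t hts).inner hU').const_mul 2)
    hbound' (hB.const_mul 2) (hderiv.mono fun x hx r hr => (hx r hr).norm_sq)
  rw [integral_const_mul] at hE
  exact ⟨by simpa using hint.const_mul (1 / 2), hE⟩

end InnerProductSpace

lemma norm_sub_sq_le_of_norm_sq_le {E : Type*} [SeminormedAddCommGroup E] {a b : E} {A B : ℝ}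
    (ha : ‖a‖ ^ 2 ≤ A) (hb : ‖b‖ ^ 2 ≤ B) : ‖a - b‖ ^ 2 ≤ 2 * (A + B) :=
  calc ‖a - b‖ ^ 2 ≤ (‖a‖ + ‖b‖) ^ 2 := by gcongr; exact norm_sub_le a b
    _ ≤ 2 * (‖a‖ ^ 2 + ‖b‖ ^ 2) := add_sq_le
    _ ≤ 2 * (A + B) := by gcongr

namespace IsAdmissibleHeatSolution

variable {f f' : ℝ × ℝ → ℂ} {u₀ u₀' g₀ g₀' : ℝ → ℂ} {V W : ℝ → ℝ → ℂ} {x t : ℝ}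

lemma contDiffAt (hV : IsAdmissibleHeatSolution f u₀ g₀ V) (hx : 0 < x) (ht : 0 < t) :
    ContDiffAt ℝ 2 (fun p : ℝ × ℝ => V p.1 p.2) (x, t) := by
  refine hV.1.contDiffAt ?_
  filter_upwards [prod_mem_nhds (Ioi_mem_nhds hx) (Ioi_mem_nhds ht)] with p hp
  exact ⟨⟨hp.1.le, hp.2.le⟩, fun h => hp.1.ne' (congrArg Prod.fst h)⟩

lemma contDiffAt_space (hV : IsAdmissibleHeatSolution f u₀ g₀ V) (hx : 0 < x) (ht : 0 < t) :
    ContDiffAt ℝ 2 (fun y => V y t) x :=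
  (hV.contDiffAt hx ht).comp (f := fun y : ℝ => (y, t)) x (by fun_prop)

lemma differentiableAt_time (hV : IsAdmissibleHeatSolution f u₀ g₀ V) (hx : 0 < x) (ht : 0 < t) :
    DifferentiableAt ℝ (fun s => V x s) t :=
  ((hV.contDiffAt hx ht).comp (f := fun s : ℝ => (x, s)) t (by fun_prop)).differentiableAt
    two_ne_zero

lemma differentiableAt_space (hV : IsAdmissibleHeatSolution f u₀ g₀ V) (hx : 0 < x) (ht : 0 < t) :
    DifferentiableAt ℝ (fun y => V y t) x :=
  (hV.contDiffAt_space hx ht).differentiableAt two_ne_zero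

lemma hasDerivAt_deriv_space (hV : IsAdmissibleHeatSolution f u₀ g₀ V) (hx : 0 < x) (ht : 0 < t) :
    HasDerivAt (deriv fun y => V y t) (deriv (fun s => V x s) t - f (x, t)) x := by
  have hdiff : DifferentiableAt ℝ (deriv fun y => V y t) x :=
    ((hV.contDiffAt_space hx ht).derivWithin (m := 1) one_add_one_eq_two.le).differentiableAt
      one_ne_zero
  have hderiv : deriv (deriv fun y => V y t) x = deriv (fun s => V x s) t - f (x, t) := by
    have heat_eq : deriv (fun s => V x s) t - iteratedDeriv 2 (fun y => V y t) x = f (x, t) :=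
      hV.2.1 x t hx ht
    rw [← heat_eq, iteratedDeriv_succ, iteratedDeriv_one, sub_sub_cancel]
  exact hderiv ▸ hdiff.hasDerivAt

lemma continuousOn_space (hV : IsAdmissibleHeatSolution f u₀ g₀ V) (ht : 0 < t) :
    ContinuousOn (fun x => V x t) (Ioi 0) := fun _ hx =>
  (hV.differentiableAt_space hx ht).continuousAt.continuousWithinAt

lemma continuousOn_deriv_time (hV : IsAdmissibleHeatSolution f u₀ g₀ V) (ht : 0 < t) :
    ContinuousOn (fun x => deriv (fun s => V x s) t) (Ioi 0) := fun _ hx =>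
  ((ContDiffAt.fderiv (m := 1) (hV.contDiffAt hx ht) contDiffAt_const one_add_one_eq_two.le
    ).continuousAt.clm_apply continuousAt_const).continuousWithinAt

lemma aestronglyMeasurable_space (hV : IsAdmissibleHeatSolution f u₀ g₀ V) (ht : 0 < t) :
    AEStronglyMeasurable (fun x => V x t) (volume.restrict (Ioi 0)) :=
  (hV.continuousOn_space ht).aestronglyMeasurable measurableSet_Ioi

lemma isBoundedUnder_norm_deriv_space_zero (hV : IsAdmissibleHeatSolution f u₀ g₀ V)
    (ht : 0 < t) : (𝓝[>] 0).IsBoundedUnder (· ≤ ·) (norm ∘ deriv fun y => V y t) := by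
  have hslice : ContDiffOn ℝ 2 (fun y => V y t) (Ici 0) :=
    hV.1.comp (f := fun y : ℝ => (y, t)) (by fun_prop)
      fun _ hy => ⟨⟨hy, ht.le⟩, fun h => ht.ne' (congrArg Prod.snd h)⟩
  exact isBoundedUnder_norm_deriv_of_contDiffOn_Ici (hslice.of_le one_le_two)

lemma tendsto_inner_deriv_space_zero (hV : IsAdmissibleHeatSolution f u₀ 0 V) (ht : 0 < t) :
    Tendsto (fun x => ⟪V x t, deriv (fun y => V y t) x⟫) (𝓝[>] 0) (𝓝 0) := by
  have hboundary : Tendsto (fun x => V x t) (𝓝[>] 0) (𝓝 0) := hV.2.2.2.1 t ht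
  exact hboundary.op_zero_isBoundedUnder_le (hV.isBoundedUnder_norm_deriv_space_zero ht) _
    norm_inner_le_norm

lemma tendsto_inner_deriv_space_atTop (hV : IsAdmissibleHeatSolution f u₀ g₀ V) (ht : 0 < t) :
    Tendsto (fun x => ⟪V x t, deriv (fun y => V y t) x⟫) atTop (𝓝 0) := by
  obtain ⟨hlim, M, hM⟩ := hV.2.2.2.2.1 t ht
  exact hlim.op_zero_isBoundedUnder_le
    (isBoundedUnder_of_eventually_le ((eventually_ge_atTop 1).mono hM)) _ norm_inner_le_norm

lemma exists_integrable_bound {T : ℝ} (hV : IsAdmissibleHeatSolution f u₀ g₀ V) (hT : 0 < T) :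
    ∃ B : ℝ → ℝ, IntegrableOn B (Ioi 0) ∧ ∀ x t : ℝ, 0 < x → 0 < t → t ≤ T →
      ‖V x t‖ ^ 2 ≤ B x ∧ ‖deriv (fun s => V x s) t‖ ^ 2 ≤ B x :=
  hV.2.2.2.2.2 T hT

lemma integrableOn_norm_sq (hV : IsAdmissibleHeatSolution f u₀ g₀ V) (ht : 0 < t) :
    IntegrableOn (fun x => ‖V x t‖ ^ 2) (Ioi 0) := by
  obtain ⟨B, hB, hVB⟩ := hV.exists_integrable_bound ht
  refine hB.mono' ((hV.aestronglyMeasurable_space ht).norm.pow 2) ?_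
  filter_upwards [ae_restrict_mem measurableSet_Ioi] with x hx
  simpa only [norm_pow, norm_norm] using (hVB x t hx ht le_rfl).1

lemma integrableOn_inner_and_hasDerivAt_halfLineEnergy
    (hV : IsAdmissibleHeatSolution f u₀ g₀ V) (ht : 0 < t) :
    IntegrableOn (fun x => ⟪V x t, deriv (fun s => V x s) t⟫) (Ioi 0) ∧
      HasDerivAt (halfLineEnergy V) (2 * ∫ x in Ioi 0, ⟪V x t, deriv (fun s => V x s) t⟫) t := by
  obtain ⟨B, hB, hVB⟩ := hV.exists_integrable_bound (add_pos ht one_pos)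
  refine hasDerivAt_integral_norm_sq_of_dominated (U := fun s x => V x s)
    (U' := fun s x => deriv (fun r => V x r) s) (Ioo_mem_nhds ht (lt_add_one t))
    (fun s hs => hV.aestronglyMeasurable_space hs.1)
    ((hV.continuousOn_deriv_time ht).aestronglyMeasurable measurableSet_Ioi) hB ?_ ?_
  · filter_upwards [ae_restrict_mem measurableSet_Ioi] with x hx s hs
    exact hVB x s hx hs.1 hs.2.le
  · filter_upwards [ae_restrict_mem measurableSet_Ioi] with x hx s hs
    exact (hV.differentiableAt_time hx hs.1).hasDerivAt

lemma antitoneOn_halfLineEnergy (hV : IsAdmissibleHeatSolution 0 u₀ 0 V) :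
    AntitoneOn (halfLineEnergy V) (Ioi 0) := by
  have hE : ∀ t ∈ Ioi (0 : ℝ), HasDerivAt (halfLineEnergy V)
      (2 * ∫ x in Ioi 0, ⟪V x t, deriv (fun s => V x s) t⟫) t :=
    fun t ht => (hV.integrableOn_inner_and_hasDerivAt_halfLineEnergy ht).2
  have hE_nonpos : ∀ t ∈ Ioi (0 : ℝ),
      2 * ∫ x in Ioi 0, ⟪V x t, deriv (fun s => V x s) t⟫ ≤ 0 := by
    refine fun t ht => mul_nonpos_of_nonneg_of_nonpos zero_le_two ?_
    refine integral_Ioi_inner_deriv_deriv_nonpos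
      (fun x hx => (hV.differentiableAt_space hx ht).hasDerivAt) (fun x hx => ?_)
      (hV.tendsto_inner_deriv_space_zero ht) (hV.tendsto_inner_deriv_space_atTop ht)
      (hV.integrableOn_inner_and_hasDerivAt_halfLineEnergy ht).1
    simpa only [Pi.zero_apply, sub_zero] using hV.hasDerivAt_deriv_space hx ht
  exact antitoneOn_of_hasDerivWithinAt_nonpos (convex_Ioi 0)
    (fun t ht => (hE t ht).continuousAt.continuousWithinAt)
    (fun t ht => (hE t (interior_subset ht)).hasDerivWithinAt)
    fun t ht => hE_nonpos t (interior_subset ht)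

lemma tendsto_halfLineEnergy_zero (hV : IsAdmissibleHeatSolution f u₀ g₀ V) :
    Tendsto (halfLineEnergy V) (𝓝[>] 0) (𝓝 (∫ x in Ioi 0, ‖u₀ x‖ ^ 2)) := by
  obtain ⟨B, hB, hVB⟩ := hV.exists_integrable_bound one_pos
  refine tendsto_integral_filter_of_dominated_convergence B ?_ ?_ hB ?_
  · filter_upwards [self_mem_nhdsWithin] with t ht
    exact (hV.aestronglyMeasurable_space ht).norm.pow 2
  · filter_upwards [Ioo_mem_nhdsGT one_pos] with t ht
    filter_upwards [ae_restrict_mem measurableSet_Ioi] with x hx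
    simpa only [norm_pow, norm_norm] using (hVB x t hx ht.1 ht.2.le).1
  · filter_upwards [ae_restrict_mem measurableSet_Ioi] with x hx
    have hinit : Tendsto (fun t => V x t) (𝓝[>] 0) (𝓝 (u₀ x)) := hV.2.2.1 x hx
    exact hinit.norm.pow 2

lemma eq_zero_of_halfLineEnergy_eq_zero (hV : IsAdmissibleHeatSolution f u₀ g₀ V) (hx : 0 < x)
    (ht : 0 < t) (hE : halfLineEnergy V t = 0) : V x t = 0 := by
  have hae : (fun x => ‖V x t‖ ^ 2) =ᵐ[volume.restrict (Ioi 0)] 0 :=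
    (setIntegral_eq_zero_iff_of_nonneg_ae (ae_of_all _ fun x => sq_nonneg ‖V x t‖)
      (hV.integrableOn_norm_sq ht)).1 hE
  have hzero : ‖V x t‖ ^ 2 = 0 :=
    Measure.eqOn_open_of_ae_eq hae isOpen_Ioi ((hV.continuousOn_space ht).norm.pow 2)
      continuousOn_const hx
  exact norm_eq_zero.1 (sq_eq_zero_iff.1 hzero)

lemma eq_zero (hV : IsAdmissibleHeatSolution 0 0 0 V) (hx : 0 < x) (ht : 0 < t) : V x t = 0 := by
  have hlim : Tendsto (halfLineEnergy V) (𝓝[>] 0) (𝓝 0) := by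
    simpa using hV.tendsto_halfLineEnergy_zero
  have hle : halfLineEnergy V t ≤ 0 := by
    refine ge_of_tendsto hlim ?_
    filter_upwards [Ioo_mem_nhdsGT ht] with s hs
    exact hV.antitoneOn_halfLineEnergy hs.1 ht hs.2.le
  have hnonneg : 0 ≤ halfLineEnergy V t := integral_nonneg fun x => sq_nonneg ‖V x t‖
  exact hV.eq_zero_of_halfLineEnergy_eq_zero hx ht (hle.antisymm hnonneg)

lemma sub (hV : IsAdmissibleHeatSolution f u₀ g₀ V) (hW : IsAdmissibleHeatSolution f' u₀' g₀' W) :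
    IsAdmissibleHeatSolution (f - f') (u₀ - u₀') (g₀ - g₀') (V - W) := by
  have hspace : ∀ x t : ℝ, 0 < x → 0 < t → deriv (fun y => (V - W) y t) x =
      deriv (fun y => V y t) x - deriv (fun y => W y t) x := fun x t hx ht =>
    deriv_fun_sub (hV.differentiableAt_space hx ht) (hW.differentiableAt_space hx ht)
  have htime : ∀ x t : ℝ, 0 < x → 0 < t → deriv (fun s => (V - W) x s) t =
      deriv (fun s => V x s) t - deriv (fun s => W x s) t := fun x t hx ht =>
    deriv_fun_sub (hV.differentiableAt_time hx ht) (hW.differentiableAt_time hx ht)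
  have hspace₂ : ∀ x t : ℝ, 0 < x → 0 < t → iteratedDeriv 2 (fun y => (V - W) y t) x =
      iteratedDeriv 2 (fun y => V y t) x - iteratedDeriv 2 (fun y => W y t) x := fun x t hx ht =>
    iteratedDeriv_fun_sub (hV.contDiffAt_space hx ht) (hW.contDiffAt_space hx ht)
  obtain ⟨hV_diff, hV_eq, hV_init, hV_bdry, hV_decay, hV_dom⟩ := hV
  obtain ⟨hW_diff, hW_eq, hW_init, hW_bdry, hW_decay, hW_dom⟩ := hW
  refine ⟨hV_diff.sub hW_diff, fun x t hx ht => ?_, fun x hx => (hV_init x hx).sub (hW_init x hx),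
    fun t ht => (hV_bdry t ht).sub (hW_bdry t ht), fun t ht => ⟨?_, ?_⟩, fun T hT => ?_⟩
  · rw [htime x t hx ht, hspace₂ x t hx ht, sub_sub_sub_comm, hV_eq x t hx ht, hW_eq x t hx ht,
      Pi.sub_apply]
  · simpa only [Pi.sub_apply, sub_zero] using (hV_decay t ht).1.sub (hW_decay t ht).1
  · obtain ⟨-, M, hM⟩ := hV_decay t ht
    obtain ⟨-, N, hN⟩ := hW_decay t ht
    refine ⟨M + N, fun x hx => ?_⟩
    rw [hspace x t (one_pos.trans_le hx) ht]
    exact norm_sub_le_of_le (hM x hx) (hN x hx)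
  · obtain ⟨A, hA, hVA⟩ := hV_dom T hT
    obtain ⟨B, hB, hWB⟩ := hW_dom T hT
    refine ⟨fun x => 2 * (A x + B x), (hA.add hB).const_mul 2, fun x t hx ht htT => ?_⟩
    obtain ⟨hV_le, hV_deriv_le⟩ := hVA x t hx ht htT
    obtain ⟨hW_le, hW_deriv_le⟩ := hWB x t hx ht htT
    rw [htime x t hx ht]
    exact ⟨norm_sub_sq_le_of_norm_sq_le hV_le hW_le,
      norm_sub_sq_le_of_norm_sq_le hV_deriv_le hW_deriv_le⟩

end IsAdmissibleHeatSolution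

theorem heat_uniqueness_general {f : ℝ × ℝ → ℂ} {u₀ g₀ : ℝ → ℂ} {V W : ℝ → ℝ → ℂ}
    (hV : IsAdmissibleHeatSolution f u₀ g₀ V) (hW : IsAdmissibleHeatSolution f u₀ g₀ W) :
    ∀ x t : ℝ, 0 < x → 0 < t → V x t = W x t := by
  have hVW : IsAdmissibleHeatSolution 0 0 0 (V - W) := by
    simpa only [sub_self] using hV.sub hW
  exact fun x t hx ht => sub_eq_zero.1 (hVW.eq_zero hx ht)

/-- Uniqueness for the forced heat equation on the half-line, under the compatibility
conditions `u₀(0) = g₀(0)` and `u₀''(0) + f(0,0) = g₀'(0)`. -/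
theorem heat_uniqueness (u₀ : SchwartzMap ℝ ℂ) (g₀ : ℝ → ℂ)
    (hg₀ : ContDiff ℝ (⊤ : ℕ∞) g₀) (f : SchwartzMap (ℝ × ℝ) ℂ)
    (hcomp₁ : u₀ 0 = g₀ 0)
    (hcomp₂ : deriv (deriv (u₀ : ℝ → ℂ)) 0 + f (0, 0) = deriv g₀ 0)
    (V W : ℝ → ℝ → ℂ)
    (hV : IsAdmissibleHeatSolution (f : ℝ × ℝ → ℂ) (u₀ : ℝ → ℂ) g₀ V)
    (hW : IsAdmissibleHeatSolution (f : ℝ × ℝ → ℂ) (u₀ : ℝ → ℂ) g₀ W) :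
    ∀ x t : ℝ, 0 < x → 0 < t → V x t = W x t :=
  heat_uniqueness_general hV hW
end
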